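/- arXiv:2512.00270 — 3 statements merged into one kernel-verified Lean document; each statement's English description precedes it below -/
import Mathlib

section
/- Let F : S → G(S) be a Markov chain on a measurable space S and let (A,B) be a pair of measurable subsets of S. Then ℙ_{s₀}[Streett(A,B)] = 1 for every initial state s₀ ∈ S if and only if ℙ_{s₀}[step_{s₀}^{(A,B)} < ∞] = 1 for every initial state s₀ ∈ S. -/
open MeasureTheory ProbabilityTheory Set
open scoped ENNReal NNReal

variable {S : Type*} [MeasurableSpace S]

/-- Prepend an initial state to a trace. -/
def prep (s₀ : S) (ω : ℕ → S) : ℕ → S := fun n => Nat.rec s₀ (fun k _ => ω k) n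

/-- `stepCount A B s₀ ω` is the number of indices `i` with
`0 ≤ i < min {j | s_j ∈ B}` and `s_i ∈ A`, where `s₀ s₁ s₂ ⋯` is the trace `ω`
prefixed with the initial state `s₀`. -/
noncomputable def stepCount (A B : Set S) (s₀ : S) (ω : ℕ → S) : ℕ∞ :=
  {i : ℕ | prep s₀ ω i ∈ A ∧ ∀ j ≤ i, prep s₀ ω j ∉ B}.encard

/-- The Streett condition for the pair `(A, B)`: either `A` is visited only
finitely often, or `B` is visited infinitely often. -/
def streett (A B : Set S) : Set (ℕ → S) :=
  {ω | {i : ℕ | ω i ∈ A}.Finite ∨ {i : ℕ | ω i ∈ B}.Infinite}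

/-!
Counting steps from `s₀` yields a finite number exactly when the prefixed trace visits `A` finitely
often or visits `B` at least once. A trace satisfies the Streett condition exactly when all its
suffixes have this weaker property. If the weaker property holds almost surely from every initial
state, then by the Markov recursion it holds almost surely for each suffix, hence for all
countably many suffixes simultaneously. The converse is pathwise, since prefixing a state does not
affect the Streett condition.
-/

open Filter

section Traces

variable {α : Type*} {A B : Set α}

/-- The weakening of the Streett condition for the pair `(A, B)` in which a single visit to `B`
suffices: `A` is visited only finitely often, or `B` is visited at least once. On a trace that
includes its initial state, this says that the number of `(A, B)`-steps is finite. -/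
def weakStreett (A B : Set α) : Set (ℕ → α) :=
  {ω | {i : ℕ | ω i ∈ A}.Finite ∨ ∃ i, ω i ∈ B}

theorem finite_setOf_mem_iff_eventually_notMem {ω : ℕ → α} :
    {i | ω i ∈ A}.Finite ↔ ∀ᶠ i in atTop, ω i ∉ A := by
  simp only [← Nat.cofinite_eq_atTop, eventually_cofinite, not_not]

theorem finite_setOf_mem_shift_iff {ω : ℕ → α} (n : ℕ) :
    {i | ω (i + n) ∈ A}.Finite ↔ {i | ω i ∈ A}.Finite :=
  calc {i | ω (i + n) ∈ A}.Finite
      ↔ ∀ᶠ i in atTop, ω (i + n) ∉ A := finite_setOf_mem_iff_eventually_notMem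
    _ ↔ ∀ᶠ i in map (· + n) atTop, ω i ∉ A := eventually_map.symm
    _ ↔ ∀ᶠ i in atTop, ω i ∉ A := by rw [map_add_atTop_eq_nat]
    _ ↔ {i | ω i ∈ A}.Finite := finite_setOf_mem_iff_eventually_notMem.symm

theorem finite_setOf_mem_before_hit_iff_mem_weakStreett {ω : ℕ → α} :
    {i | ω i ∈ A ∧ ∀ j ≤ i, ω j ∉ B}.Finite ↔ ω ∈ weakStreett A B := by
  by_cases hit : ∃ j, ω j ∈ B
  · obtain ⟨j, hj⟩ := hit
    have finite_steps : {i | ω i ∈ A ∧ ∀ j ≤ i, ω j ∉ B}.Finite :=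
      (finite_lt_nat j).subset fun i hi => not_le.1 fun hji => hi.2 j hji hj
    exact iff_of_true finite_steps (Or.inr ⟨j, hj⟩)
  · have no_hit : ∀ j, ω j ∉ B := not_exists.1 hit
    simp [weakStreett, no_hit]

theorem mem_streett_iff_forall_shift_mem_weakStreett {ω : ℕ → α} :
    ω ∈ streett A B ↔ ∀ n, (fun k => ω (k + n)) ∈ weakStreett A B := by
  have infinite_iff : {i | ω i ∈ B}.Infinite ↔ ∀ n, ∃ k, ω (k + n) ∈ B := by
    simp only [← Nat.frequently_atTop_iff_infinite, frequently_atTop,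
      le_iff_exists_add', ↓existsAndEq, true_and]
  simp only [streett, weakStreett, mem_ofPred_eq, finite_setOf_mem_shift_iff, infinite_iff,
    forall_or_left]

theorem streett_subset_weakStreett : streett A B ⊆ weakStreett A B :=
  fun _ hω => mem_streett_iff_forall_shift_mem_weakStreett.1 hω 0

theorem prep_mem_streett_iff {s : α} {ω : ℕ → α} : prep s ω ∈ streett A B ↔ ω ∈ streett A B :=
  or_congr (finite_setOf_mem_shift_iff (ω := prep s ω) 1).symm
    (finite_setOf_mem_shift_iff (ω := prep s ω) 1).not.symm

theorem stepCount_lt_top_iff {s : α} {ω : ℕ → α} :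
    stepCount A B s ω < ⊤ ↔ prep s ω ∈ weakStreett A B := by
  rw [stepCount, encard_lt_top_iff, finite_setOf_mem_before_hit_iff_mem_weakStreett]

end Traces

section Measurability

variable {A B : Set S}

theorem measurable_prep (s : S) : Measurable (prep s) :=
  measurable_pi_iff.2 fun
    | 0 => measurable_const
    | k + 1 => measurable_pi_apply k

theorem measurable_shift (n : ℕ) : Measurable fun (ω : ℕ → S) k => ω (k + n) :=
  measurable_pi_iff.2 fun k => measurable_pi_apply (k + n)

theorem measurableSet_weakStreett (hA : MeasurableSet A) (hB : MeasurableSet B) :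
    MeasurableSet (weakStreett A B) := by
  have measurable_visit {C : Set S} (hC : MeasurableSet C) (i : ℕ) :
      MeasurableSet {ω : ℕ → S | ω i ∈ C} := measurable_pi_apply i hC
  have weakStreett_eq : weakStreett A B =
      liminf (fun i => {ω : ℕ → S | ω i ∈ A}ᶜ) atTop ∪ ⋃ i, {ω : ℕ → S | ω i ∈ B} := by
    ext ω
    simp only [weakStreett, finite_setOf_mem_iff_eventually_notMem, mem_union, mem_ofPred_eq,
      mem_liminf_iff_eventually_mem, mem_compl_iff, mem_iUnion]
  rw [weakStreett_eq]
  exact (MeasurableSet.measurableSet_liminf fun i => (measurable_visit hA i).compl).union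
    (.iUnion (measurable_visit hB))

theorem measurableSet_streett (hA : MeasurableSet A) (hB : MeasurableSet B) :
    MeasurableSet (streett A B) := by
  have streett_eq : streett A B = ⋂ n, (fun ω k => ω (k + n)) ⁻¹' weakStreett A B :=
    Set.ext fun _ => by
      simp only [mem_streett_iff_forall_shift_mem_weakStreett, mem_iInter, mem_preimage]
  rw [streett_eq]
  exact .iInter fun n => measurable_shift n (measurableSet_weakStreett hA hB)

theorem measurableSet_stepCount_lt_top (hA : MeasurableSet A) (hB : MeasurableSet B) (s : S) :
    MeasurableSet {ω | stepCount A B s ω < ⊤} := by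
  simp only [stepCount_lt_top_iff]
  exact measurable_prep s (measurableSet_weakStreett hA hB)

end Measurability

theorem ae_bind_of_ae_ae {α β : Type*} [MeasurableSpace α] [MeasurableSpace β] {μ : Measure α}
    {κ : α → Measure β} {T : Set β} (hT : MeasurableSet T) (h : ∀ᵐ a ∂μ, ∀ᵐ b ∂κ a, b ∈ T) :
    ∀ᵐ b ∂μ.bind κ, b ∈ T := by
  have null_le : μ.bind κ Tᶜ ≤ 0 :=
    calc μ.bind κ Tᶜ ≤ ∫⁻ a, κ a Tᶜ ∂μ := Measure.bind_apply_le κ hT.compl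
      _ = 0 := lintegral_eq_zero_of_ae_eq_zero h
  exact le_zero_iff.1 null_le

section MarkovRecursion

variable {F : S → Measure S} {P : S → Measure (ℕ → S)} {T : Set (ℕ → S)}

theorem ae_mem_of_forall_ae_prep_mem
    (hP : ∀ s, P s = (F s).bind fun s₁ => (P s₁).map (prep s₁)) (hT : MeasurableSet T)
    (h : ∀ s, ∀ᵐ ω ∂P s, prep s ω ∈ T) (s : S) : ∀ᵐ ω ∂P s, ω ∈ T := by
  rw [hP s]
  exact ae_bind_of_ae_ae hT <| .of_forall fun s₁ =>
    (ae_map_iff (measurable_prep s₁).aemeasurable hT).2 (h s₁)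

theorem ae_shift_mem_of_forall_ae_prep_mem
    (hP : ∀ s, P s = (F s).bind fun s₁ => (P s₁).map (prep s₁)) (hT : MeasurableSet T)
    (h : ∀ s, ∀ᵐ ω ∂P s, prep s ω ∈ T) (n : ℕ) (s : S) :
    ∀ᵐ ω ∂P s, (fun k => ω (k + n)) ∈ T := by
  induction n generalizing s with
  | zero => exact ae_mem_of_forall_ae_prep_mem hP hT h s
  | succ n ih =>
    -- `ih` applies because `prep s ω (k + (n + 1))` reduces to `ω (k + n)`.
    exact ae_mem_of_forall_ae_prep_mem hP (measurable_shift (n + 1) hT) ih s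

end MarkovRecursion

theorem streett_as_iff_null_recurrent_general
    (F : Kernel S S) (P : Kernel S (ℕ → S))
    (hP : ∀ s₀ : S, P s₀ = (F s₀).bind fun s₁ => (P s₁).map (prep s₁))
    {A B : Set S} (hA : MeasurableSet A) (hB : MeasurableSet B) :
    (∀ s₀ : S, ∀ᵐ ω ∂P s₀, ω ∈ streett A B) ↔
      ∀ s₀ : S, ∀ᵐ ω ∂P s₀, stepCount A B s₀ ω < ⊤ := by
  simp only [stepCount_lt_top_iff]
  refine ⟨fun streett_ae s₀ => ?_, fun weak_ae s₀ => ?_⟩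
  · filter_upwards [streett_ae s₀] with ω hω
    exact streett_subset_weakStreett (prep_mem_streett_iff.2 hω)
  · simp only [mem_streett_iff_forall_shift_mem_weakStreett, ae_all_iff]
    exact fun n =>
      ae_shift_mem_of_forall_ae_prep_mem hP (measurableSet_weakStreett hA hB) weak_ae n s₀

/-- For a Markov chain `F` (with induced trace measures `P s₀`, characterized by the
Ionescu–Tulcea recursion `hP`) and a measurable Streett pair `(A, B)`:
the Streett condition holds almost surely from every initial state iff the chain
is null `(A,B)`-recurrent from every initial state. -/
theorem streett_as_iff_null_recurrent
    (F : Kernel S S) [IsMarkovKernel F]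
    (P : Kernel S (ℕ → S)) [IsMarkovKernel P]
    (hP : ∀ s₀ : S, (P s₀ : Measure (ℕ → S)) = (F s₀).bind fun s₁ => (P s₁).map (prep s₁))
    (A B : Set S) (hA : MeasurableSet A) (hB : MeasurableSet B) :
    (∀ s₀ : S, P s₀ (streett A B) = 1) ↔
      (∀ s₀ : S, P s₀ {ω | stepCount A B s₀ ω < ⊤} = 1) := by
  simpa only [← mem_ae_iff_prob_eq_one (measurableSet_streett hA hB),
    ← mem_ae_iff_prob_eq_one (measurableSet_stepCount_lt_top hA hB _)] using!
    streett_as_iff_null_recurrent_general F P hP hA hB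
end

section
/- Consider the deterministic transition function next on the state space S = {l₀, l₁} × ℕ × ℕ defined by next(l₀, m, n) = (l₁, n, n), next(l₁, m, n) = (l₁, m−1, n) if m > 0, and next(l₁, 0, n) = (l₀, 0, n+1). Let A = {l₁} × ℕ × ℕ and B = {l₀} × ℕ × ℕ. Then there exist no function r : S → [0,∞) and constants ε > 0, M > 0 such that for every x ∈ S, r(next(x)) ≤ r(x) − ε·1_{A∖B}(x) + M·1_B(x). In other words, no Streett supermartingale exists for this (deterministic) Markov chain with Streett pair (A, B). -/
open Set

/-- The deterministic transition function of the program
`while true do (m := n; while m > 0 do m := m − 1; n := n + 1)`,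
on the state space `{l₀, l₁} × ℕ × ℕ` (location `l₀` is `false`, `l₁` is `true`). -/
def nextState : Bool × ℕ × ℕ → Bool × ℕ × ℕ
  | (false, _, n) => (true, n, n)
  | (true, m, n) => if 0 < m then (true, m - 1, n) else (false, 0, n + 1)

/-! Summing the supermartingale inequality along an orbit bounds `ε` times the number of visits to
`A \ B` by an affine function of the number of visits to `B`. The orbit from `(l₀, 0, 0)`
to `(l₀, 0, n)` makes only `n` steps from `l₀` but `1 + 2 + ⋯ + n` steps from `l₁`, because the
inner loop gets longer in each round. This quadratic count outgrows every affine function of `n`. -/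

section Orbit

variable {S : Type*} {f : S → S}

theorem apply_iterate_le_add_birkhoffSum {G : Type*} [AddCommMonoid G] [Preorder G]
    [AddRightMono G] {r g : S → G} (h : ∀ x, r (f x) ≤ r x + g x) (n : ℕ) (x : S) :
    r (f^[n] x) ≤ r x + birkhoffSum f g n x := by
  induction n with
  | zero => simp
  | succ n ih =>
    calc r (f^[n + 1] x) = r (f (f^[n] x)) := by rw [Function.iterate_succ_apply']
      _ ≤ r (f^[n] x) + g (f^[n] x) := h _
      _ ≤ r x + birkhoffSum f g n x + g (f^[n] x) := by gcongr
      _ = r x + birkhoffSum f g (n + 1) x := by rw [birkhoffSum_succ, add_assoc]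

theorem mul_birkhoffSum_le_add_mul_birkhoffSum {R : Type*} [Ring R] [PartialOrder R]
    [IsOrderedAddMonoid R] {r a b : S → R} {ε M : R} (hr : ∀ x, 0 ≤ r x)
    (h : ∀ x, r (f x) ≤ r x - ε * a x + M * b x) (n : ℕ) (x : S) :
    ε * birkhoffSum f a n x ≤ r x + M * birkhoffSum f b n x := by
  have hsum : birkhoffSum f (fun y => M * b y - ε * a y) n x =
      M * birkhoffSum f b n x - ε * birkhoffSum f a n x := by
    simp only [birkhoffSum, Finset.sum_sub_distrib, Finset.mul_sum]
  have hstep (y : S) : r (f y) ≤ r y + (M * b y - ε * a y) :=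
    (h y).trans_eq (by abel)
  have horbit : 0 ≤ r x + (M * birkhoffSum f b n x - ε * birkhoffSum f a n x) :=
    hsum ▸ (hr _).trans (apply_iterate_le_add_birkhoffSum hstep n x)
  rwa [← add_sub_assoc, sub_nonneg] at horbit

end Orbit

theorem exists_nat_add_mul_lt_mul_choose_two {K : Type*} [Field K] [LinearOrder K]
    [IsStrictOrderedRing K] [Archimedean K] {ε : K} (hε : 0 < ε) (c M : K) :
    ∃ n : ℕ, c + M * n < ε * (n + 1).choose 2 := by
  obtain ⟨n, hn⟩ := exists_nat_gt (2 * (|c| + M) / ε)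
  refine ⟨n + 1, ?_⟩
  have hslope : |c| + M < ε * (n + 2) / 2 := by
    rw [div_lt_iff₀ hε] at hn
    linarith
  have hconst : c ≤ |c| * (n + 1) :=
    (le_abs_self c).trans (le_mul_of_one_le_right (abs_nonneg c) (by simp))
  calc c + M * ↑(n + 1) ≤ (|c| + M) * (n + 1) := by push_cast; linarith
    _ < ε * (n + 2) / 2 * (n + 1) := by gcongr
    _ = ε * (n + 1 + 1).choose 2 := by rw [Nat.cast_choose_two]; push_cast; ring

section NextState

theorem nextState_true_succ (m n : ℕ) : nextState (true, m + 1, n) = (true, m, n) := by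
  simp [nextState]

theorem iterate_nextState_true (m n : ℕ) :
    nextState^[m + 1] (true, m, n) = (false, 0, n + 1) := by
  induction m with
  | zero => rfl
  | succ m ih => rw [Function.iterate_succ_apply, nextState_true_succ, ih]

theorem iterate_nextState_false (m n : ℕ) :
    nextState^[n + 2] (false, m, n) = (false, 0, n + 1) :=
  iterate_nextState_true n n

/-- The number of steps in which `nextState` completes the first `n` rounds of the outer loop,
starting from `(l₀, 0, 0)`: round `k` (counted from `0`) consists of one step from `l₀` and `k + 1`
steps from `l₁`. -/
def outerLoopTime (n : ℕ) : ℕ := ∑ k ∈ Finset.range n, (k + 2)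

theorem outerLoopTime_succ (n : ℕ) : outerLoopTime (n + 1) = outerLoopTime n + (n + 2) :=
  Finset.sum_range_succ _ _

theorem iterate_nextState_outerLoopTime (n : ℕ) :
    nextState^[outerLoopTime n] (false, 0, 0) = (false, 0, n) := by
  induction n with
  | zero => rfl
  | succ n ih =>
    rw [outerLoopTime_succ, add_comm, Function.iterate_add_apply, ih, iterate_nextState_false]

variable {G : Type*} [AddCommMonoid G] (w : Bool → G)

theorem birkhoffSum_nextState_true (m n : ℕ) :
    birkhoffSum nextState (fun x => w x.1) (m + 1) (true, m, n) = (m + 1) • w true := by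
  induction m with
  | zero => simp
  | succ m ih => rw [birkhoffSum_succ', nextState_true_succ, ih, succ_nsmul' _ (m + 1)]

theorem birkhoffSum_nextState_false (m n : ℕ) :
    birkhoffSum nextState (fun x => w x.1) (n + 2) (false, m, n) =
      w false + (n + 1) • w true := by
  rw [birkhoffSum_succ', nextState, birkhoffSum_nextState_true]

theorem birkhoffSum_nextState_outerLoopTime (n : ℕ) :
    birkhoffSum nextState (fun x => w x.1) (outerLoopTime n) (false, 0, 0) =
      n • w false + (n + 1).choose 2 • w true := by
  induction n with
  | zero => simp [outerLoopTime]
  | succ n ih =>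
    have hchoose : (n + 1 + 1).choose 2 = (n + 1).choose 2 + (n + 1) := by
      rw [Nat.choose_succ_succ', Nat.choose_one_right, add_comm]
    rw [outerLoopTime_succ, birkhoffSum_add, ih, iterate_nextState_outerLoopTime,
      birkhoffSum_nextState_false, hchoose, succ_nsmul (w false), add_nsmul _ _ (n + 1),
      add_add_add_comm]

end NextState

/-- No Streett supermartingale exists for this deterministic Markov chain with
Streett pair `(A, B) = ({l₁} × ℕ × ℕ, {l₀} × ℕ × ℕ)`: there are no `r : S → [0,∞)`
and constants `ε > 0`, `M > 0` with
`r (next x) ≤ r x − ε·1_{A∖B}(x) + M·1_B(x)` for all states `x`. -/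
theorem no_streett_supermartingale :
    ¬ ∃ (r : Bool × ℕ × ℕ → ℝ) (ε M : ℝ),
        (∀ x, 0 ≤ r x) ∧ 0 < ε ∧ 0 < M ∧
        ∀ x : Bool × ℕ × ℕ,
          r (nextState x) ≤ r x
            - ε * ({x : Bool × ℕ × ℕ | x.1 = true} \
                    {x : Bool × ℕ × ℕ | x.1 = false}).indicator (fun _ => (1 : ℝ)) x
            + M * ({x : Bool × ℕ × ℕ | x.1 = false}).indicator (fun _ => (1 : ℝ)) x := by
  rintro ⟨r, ε, M, hr, hε, -, h⟩
  have hA : ({x : Bool × ℕ × ℕ | x.1 = true} \ {x | x.1 = false}).indicator (fun _ => (1 : ℝ)) =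
      fun x => if x.1 then 1 else 0 := by
    ext ⟨_ | _, _⟩ <;> simp
  have hB : {x : Bool × ℕ × ℕ | x.1 = false}.indicator (fun _ => (1 : ℝ)) =
      fun x => if x.1 then 0 else 1 := by
    ext ⟨_ | _, _⟩ <;> simp
  rw [hA, hB] at h
  obtain ⟨n, hn⟩ := exists_nat_add_mul_lt_mul_choose_two hε (r (false, 0, 0)) M
  have hvisits := mul_birkhoffSum_le_add_mul_birkhoffSum hr h (outerLoopTime n) (false, 0, 0)
  rw [birkhoffSum_nextState_outerLoopTime (fun b => if b then (1 : ℝ) else 0),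
    birkhoffSum_nextState_outerLoopTime (fun b => if b then (0 : ℝ) else 1)] at hvisits
  exact hn.not_ge (by simpa using hvisits)
end

section
/- Let (V, E, p) be a parity graph, i.e., V is a set (possibly infinite), E ⊆ V × V, and p : V → {1,…,d} is a priority function. If there exists a progress measure for (V, E, p) — a function r : V → ℕ^d such that for each (v, w) ∈ E, r(v) ≥_{p(v)} r(w) when p(v) is even and r(v) >_{p(v)} r(w) when p(v) is odd — then every infinite walk v₁ → v₂ → ⋯ in the graph (i.e., (v_i, v_{i+1}) ∈ E for all i) satisfies the parity condition: the minimum priority occurring infinitely often among p(v₁), p(v₂), … is even. -/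
open Set

/-- The truncated strict lexicographic ordering on `ℕ^d`: `a >_k b` iff the first
`k` components of `a` are lexicographically greater than those of `b`. -/
def natGtTrunc {d : ℕ} (k : ℕ) (a b : Fin d → ℕ) : Prop :=
  ∃ l : Fin d, (l : ℕ) < k ∧ (∀ i < l, a i = b i) ∧ b l < a l

/-- The truncated non-strict lexicographic ordering on `ℕ^d`: `a ≥_k b` iff the
first `k` components of `a` are lexicographically at least those of `b`. -/
def natGeTrunc {d : ℕ} (k : ℕ) (a b : Fin d → ℕ) : Prop :=
  natGtTrunc k a b ∨ ∀ i : Fin d, (i : ℕ) < k → a i = b i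

/-!
Along a walk, let `q` be the least priority occurring infinitely often. From some point on all
priorities are at least `q`, so the first `q` components of the measure never increase
lexicographically. If `q` were odd, each of the infinitely many visits to priority `q` would
decrease them strictly, contradicting well-foundedness of the lexicographic order.
-/

open Filter

theorem eventually_le_of_isLeast_frequently_eq {ι β : Type*} [LinearOrder β]
    [LocallyFiniteOrderBot β] {l : Filter ι} {u : ι → β} {b : β}
    (hb : IsLeast {c | ∃ᶠ i in l, u i = c} b) : ∀ᶠ i in l, b ≤ u i := by
  have hne : ∀ᶠ i in l, ∀ c ∈ Iio b, u i ≠ c :=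
    (eventually_all_finite (finite_Iio b)).2 fun c hc ↦
      not_frequently.1 fun hfreq ↦ (hb.2 hfreq).not_gt hc
  filter_upwards [hne] with i hi
  exact not_lt.1 fun hlt ↦ hi (u i) hlt rfl

theorem isLeast_sInf_infinite_fibers {ι : Type*} [Infinite ι] {u : ι → ℕ} {s : Set ℕ}
    (hs : s.Finite) (hu : ∀ i, u i ∈ s) :
    IsLeast {k | {i | u i = k}.Infinite} (sInf {k | {i | u i = k}.Infinite}) := by
  obtain ⟨k, -, hk⟩ : ∃ k ∈ s, ∃ᶠ i in cofinite, u i = k :=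
    (frequently_exists_finite hs).1 (Frequently.of_forall fun i ↦ ⟨u i, hu i, rfl⟩)
  exact ⟨Nat.sInf_mem ⟨k, frequently_cofinite_iff_infinite.1 hk⟩, fun _ ↦ Nat.sInf_le⟩

theorem eventually_succ_eq_of_eventually_succ_le {β : Type*} [PartialOrder β] [WellFoundedLT β]
    {f : ℕ → β} (hf : ∀ᶠ n in atTop, f (n + 1) ≤ f n) : ∀ᶠ n in atTop, f (n + 1) = f n := by
  obtain ⟨N, hN⟩ := eventually_atTop.1 hf
  have hanti : Antitone fun n ↦ f (n + N) := antitone_nat_of_succ_le fun n ↦ by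
    simpa only [Nat.add_right_comm] using hN (n + N) (Nat.le_add_left N n)
  obtain ⟨M, hM⟩ := WellFoundedLT.antitone_chain_condition hanti
  have hconst : ∀ n ≥ M + N, f n = f (M + N) := fun n hn ↦ by
    simpa only [Nat.sub_add_cancel (le_of_add_le_right hn)] using
      (hM (n - N) (Nat.le_sub_of_add_le hn)).symm
  filter_upwards [eventually_ge_atTop (M + N)] with n hn
  rw [hconst n hn, hconst (n + 1) (Nat.le_succ_of_le hn)]

/-- The first `k` components of `a : α^d`, compared lexicographically; all of `a` when `d ≤ k`.
Indexing by a subtype of `Fin d` lets `k` range over all of `ℕ`. -/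
def lexPrefix {α : Type*} {d : ℕ} (k : ℕ) (a : Fin d → α) : Lex ({i : Fin d // (i : ℕ) < k} → α) :=
  toLex fun i ↦ a i

section LexPrefix

variable {α : Type*} {d k q : ℕ} {a b : Fin d → α}

theorem lexPrefix_eq_lexPrefix_iff :
    lexPrefix k a = lexPrefix k b ↔ ∀ i : Fin d, (i : ℕ) < k → a i = b i :=
  funext_iff.trans Subtype.forall

theorem lexPrefix_lt_lexPrefix_iff [LT α] :
    lexPrefix k a < lexPrefix k b ↔
      ∃ l : Fin d, (l : ℕ) < k ∧ (∀ i < l, a i = b i) ∧ a l < b l := by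
  constructor
  · rintro ⟨⟨l, hlk⟩, heq, hlt⟩
    exact ⟨l, hlk, fun i hi ↦ heq ⟨i, Nat.lt_trans hi hlk⟩ hi, hlt⟩
  · rintro ⟨l, hlk, heq, hlt⟩
    exact ⟨⟨l, hlk⟩, fun i hi ↦ heq i hi, hlt⟩

theorem lexPrefix_le_lexPrefix_of_le [PartialOrder α] (hqk : q ≤ k)
    (hab : lexPrefix k a ≤ lexPrefix k b) : lexPrefix q a ≤ lexPrefix q b := by
  rcases hab.lt_or_eq with hlt | heq
  · obtain ⟨l, -, heq, hlt⟩ := lexPrefix_lt_lexPrefix_iff.1 hlt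
    rcases lt_or_ge (l : ℕ) q with hlq | hql
    · exact (lexPrefix_lt_lexPrefix_iff.2 ⟨l, hlq, heq, hlt⟩).le
    · exact (lexPrefix_eq_lexPrefix_iff.2 fun i hi ↦ heq i (hi.trans_le hql)).le
  · exact (lexPrefix_eq_lexPrefix_iff.2 fun i hi ↦
      lexPrefix_eq_lexPrefix_iff.1 heq i (hi.trans_le hqk)).le

end LexPrefix

section NatTrunc

variable {d k : ℕ} {a b : Fin d → ℕ}

theorem natGtTrunc_iff_lexPrefix_lt : natGtTrunc k a b ↔ lexPrefix k b < lexPrefix k a := by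
  simp only [natGtTrunc, lexPrefix_lt_lexPrefix_iff, eq_comm]

theorem natGeTrunc_iff_lexPrefix_le : natGeTrunc k a b ↔ lexPrefix k b ≤ lexPrefix k a :=
  (or_congr natGtTrunc_iff_lexPrefix_lt (lexPrefix_eq_lexPrefix_iff.symm.trans eq_comm)).trans
    le_iff_lt_or_eq.symm

end NatTrunc

/-- `r` is a progress measure for the graph `E` with priorities `p`: along each edge `(v, w)` the
first `p v` components of `r` do not increase lexicographically, and strictly decrease when `p v`
is odd. The components lie in an arbitrary ordered type, for example the ordinals. -/
def IsProgressMeasure {V α : Type*} [PartialOrder α] {d : ℕ} (E : Set (V × V)) (p : V → ℕ)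
    (r : V → Fin d → α) : Prop :=
  ∀ v w, (v, w) ∈ E →
    (Even (p v) → lexPrefix (p v) (r w) ≤ lexPrefix (p v) (r v)) ∧
    (¬ Even (p v) → lexPrefix (p v) (r w) < lexPrefix (p v) (r v))

section ProgressMeasure

variable {V α : Type*} [PartialOrder α] {E : Set (V × V)} {d : ℕ} {p : V → ℕ} {r : V → Fin d → α}

theorem IsProgressMeasure.lexPrefix_le (hr : IsProgressMeasure E p r) {v w : V}
    (hvw : (v, w) ∈ E) : lexPrefix (p v) (r w) ≤ lexPrefix (p v) (r v) :=
  (em (Even (p v))).elim (hr v w hvw).1 fun hodd ↦ ((hr v w hvw).2 hodd).le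

theorem progress_measure_implies_parity_general [WellFoundedLT α] (hr : IsProgressMeasure E p r)
    {v : ℕ → V} (hwalk : ∀ i, (v i, v (i + 1)) ∈ E) {q : ℕ}
    (hq : IsLeast {k | {i | p (v i) = k}.Infinite} q) : Even q := by
  by_contra hodd
  simp only [← Nat.frequently_atTop_iff_infinite] at hq
  have hle : ∀ᶠ i in atTop, lexPrefix q (r (v (i + 1))) ≤ lexPrefix q (r (v i)) :=
    (eventually_le_of_isLeast_frequently_eq hq).mono fun i hi ↦
      lexPrefix_le_lexPrefix_of_le hi (hr.lexPrefix_le (hwalk i))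
  have hlt : ∃ᶠ i in atTop, lexPrefix q (r (v (i + 1))) < lexPrefix q (r (v i)) := by
    refine hq.1.mono fun i hi ↦ ?_
    subst hi
    exact (hr _ _ (hwalk i)).2 hodd
  have heq := eventually_succ_eq_of_eventually_succ_le (f := fun i ↦ lexPrefix q (r (v i))) hle
  obtain ⟨i, hi_lt, hi_eq⟩ := (hlt.and_eventually heq).exists
  exact hi_lt.ne hi_eq

end ProgressMeasure

/-- If a parity graph `(V, E, p)` (with priorities in `{1,…,d}`) admits a progress
measure `r : V → ℕ^d` — i.e. along every edge `(v, w)`, `r v ≥_{p v} r w` when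
`p v` is even and `r v >_{p v} r w` when `p v` is odd — then every infinite walk
satisfies the parity condition: the minimum priority occurring infinitely often
is even. -/
theorem progress_measure_implies_parity {V : Type*} (E : Set (V × V)) (d : ℕ)
    (p : V → ℕ) (hp : ∀ v, 1 ≤ p v ∧ p v ≤ d)
    (r : V → Fin d → ℕ)
    (hr : ∀ v w, (v, w) ∈ E →
      (Even (p v) → natGeTrunc (p v) (r v) (r w)) ∧
      (¬ Even (p v) → natGtTrunc (p v) (r v) (r w)))
    (v : ℕ → V) (hwalk : ∀ i, (v i, v (i + 1)) ∈ E) :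
    Even (sInf {q : ℕ | {i : ℕ | p (v i) = q}.Infinite}) := by
  simp only [natGeTrunc_iff_lexPrefix_le, natGtTrunc_iff_lexPrefix_lt] at hr
  exact progress_measure_implies_parity_general hr hwalk
    (isLeast_sInf_infinite_fibers (finite_Icc 1 d) fun i ↦ hp (v i))
end
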